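/- arXiv:2504.18632 — 2 statements merged into one kernel-verified Lean document; each statement's English description precedes it below -/
import Mathlib

section
/- Let T > 0, let d ≥ 1 be an integer, let τ, λ ∈ (0,1], β ≥ 0, and let η : [0,T]×ℝ^d → ℝ satisfy ‖η‖_{τ,λ;β} < ∞. Then there exists a sequence of functions η^n : [0,T]×ℝ^d → ℝ (n ≥ 1) such that for each n: ‖η^n‖_{τ,λ;β} < ∞; for each x ∈ ℝ^d the map t ↦ η^n(t,x) is infinitely differentiable on [0,T]; the time derivative ∂_t η^n(t,x) is jointly continuous in (t,x); and for every τ' ∈ (0,τ), lim_{n→∞} ‖η^n − η‖_{τ',λ;β} = 0. -/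
/-!
The time variable is clamped to `[0, T]`, which extends `η` to all times without changing its
Hölder bounds, and the extension is mollified in time: `ηa n` is its convolution with a smooth bump
of mass one supported in `[-ε, ε]`, `ε = 1 / (n + 1)`.

Only two scalar facts are needed, for `f : ℝ → ℝ` with `|f a - f b| ≤ M |b - a| ^ τ`: the mollified
`f` satisfies the same bound (`abs_mol_sub_mol_le`), and it differs from `f` by at most `M ε ^ τ`
(`abs_mol_sub_self_le`). Interpolating between the two bounds the increments of the error by
`2 M ε ^ (τ - τ') |b - a| ^ τ'` (`abs_error_sub_error_le`). Applied to `f = η(·, x)` and to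
`f = η(·, x) - η(·, y)`, with `M` the corresponding spatial weight, these facts give all the
bounds. Smoothness in time and the continuity of the derivative come from differentiating the bump
under the integral sign.
-/

open Set Filter
open scoped ENNReal NNReal BigOperators Topology

noncomputable section

/-- The weighted space-time Hölder seminorm `‖η‖_{τ,λ;β}`, valued in `ℝ≥0∞`. -/
def holderNormW {E : Type*} [NormedAddCommGroup E] (T τ lam β : ℝ) (η : ℝ → E → ℝ) : ℝ≥0∞ :=
  (⨆ a ∈ Set.Icc (0 : ℝ) T, ⨆ b ∈ Set.Icc (0 : ℝ) T, ⨆ x : E, ⨆ y : E,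
      ENNReal.ofReal (|η a x - η b x - η a y + η b y| /
        (|b - a| ^ τ * ‖x - y‖ ^ lam * (1 + ‖x‖ ^ β + ‖y‖ ^ β)))) +
  (⨆ a ∈ Set.Icc (0 : ℝ) T, ⨆ b ∈ Set.Icc (0 : ℝ) T, ⨆ x : E,
      ENNReal.ofReal (|η a x - η b x| / (|b - a| ^ τ * (1 + ‖x‖ ^ (β + lam))))) +
  (⨆ b ∈ Set.Icc (0 : ℝ) T, ⨆ x : E, ⨆ y : E,
      ENNReal.ofReal (|η b y - η b x| / (‖x - y‖ ^ lam * (1 + ‖x‖ ^ β + ‖y‖ ^ β))))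

open MeasureTheory

/-! ### The seminorm as a family of pointwise bounds -/

lemma le_mul_of_ofReal_div_le {N D : ℝ} {S : ℝ≥0∞} (hS : S < ⊤) (hD : 0 ≤ D) (h0 : D = 0 → N = 0)
    (h : ENNReal.ofReal (N / D) ≤ S) : N ≤ S.toReal * D := by
  rcases hD.eq_or_lt with hD0 | hDpos
  · simp [h0 hD0.symm, ← hD0]
  · rw [← div_le_iff₀ hDpos]
    exact (ENNReal.ofReal_le_iff_le_toReal hS.ne).1 h

/-- A finite seminorm bounds the three kinds of increments, with no exception for coinciding
points since both sides then vanish. -/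
lemma bounds_of_holderNormW_lt_top {E : Type*} [NormedAddCommGroup E] {T τ lam β : ℝ}
    (hτ : 0 < τ) (hlam : 0 < lam) {η : ℝ → E → ℝ} (h : holderNormW T τ lam β η < ⊤) :
    ∃ C : ℝ, 0 ≤ C ∧
      (∀ a ∈ Icc 0 T, ∀ b ∈ Icc 0 T, ∀ x y, |η a x - η b x - η a y + η b y| ≤
        C * (|b - a| ^ τ * ‖x - y‖ ^ lam * (1 + ‖x‖ ^ β + ‖y‖ ^ β))) ∧
      (∀ a ∈ Icc 0 T, ∀ b ∈ Icc 0 T, ∀ x, |η a x - η b x| ≤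
        C * (|b - a| ^ τ * (1 + ‖x‖ ^ (β + lam)))) ∧
      (∀ b ∈ Icc 0 T, ∀ x y, |η b y - η b x| ≤
        C * (‖x - y‖ ^ lam * (1 + ‖x‖ ^ β + ‖y‖ ^ β))) := by
  refine ⟨(holderNormW T τ lam β η).toReal, ENNReal.toReal_nonneg, ?_, ?_, ?_⟩
  · intro a ha b hb x y
    refine le_mul_of_ofReal_div_le h (by positivity) (fun h0 => ?_) ?_
    · have hw : 1 + ‖x‖ ^ β + ‖y‖ ^ β ≠ 0 := by positivity
      rcases mul_eq_zero.1 ((mul_eq_zero.1 h0).resolve_right hw) with h1 | h1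
      · have := (Real.rpow_eq_zero (abs_nonneg _) hτ.ne').1 h1
        obtain rfl : b = a := sub_eq_zero.1 (abs_eq_zero.1 this)
        simp
      · have := (Real.rpow_eq_zero (norm_nonneg _) hlam.ne').1 h1
        obtain rfl : x = y := sub_eq_zero.1 (norm_eq_zero.1 this)
        simp
    · refine le_trans ?_ (le_trans le_self_add le_self_add)
      exact le_iSup₂_of_le a ha (le_iSup₂_of_le b hb (le_iSup₂_of_le x y le_rfl))
  · intro a ha b hb x
    refine le_mul_of_ofReal_div_le h (by positivity) (fun h0 => ?_) ?_
    · have hw : 1 + ‖x‖ ^ (β + lam) ≠ 0 := by positivity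
      have := (Real.rpow_eq_zero (abs_nonneg _) hτ.ne').1 ((mul_eq_zero.1 h0).resolve_right hw)
      obtain rfl : b = a := sub_eq_zero.1 (abs_eq_zero.1 this)
      simp
    · refine le_trans ?_ (le_trans le_add_self le_self_add)
      exact le_iSup₂_of_le a ha (le_iSup₂_of_le b hb (le_iSup_of_le x le_rfl))
  · intro b hb x y
    refine le_mul_of_ofReal_div_le h (by positivity) (fun h0 => ?_) ?_
    · have hw : 1 + ‖x‖ ^ β + ‖y‖ ^ β ≠ 0 := by positivity
      have := (Real.rpow_eq_zero (norm_nonneg _) hlam.ne').1 ((mul_eq_zero.1 h0).resolve_right hw)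
      obtain rfl : x = y := sub_eq_zero.1 (norm_eq_zero.1 this)
      simp
    · refine le_trans ?_ le_add_self
      exact le_iSup₂_of_le b hb (le_iSup₂_of_le x y le_rfl)

lemma holderNormW_le_of_bounds {E : Type*} [NormedAddCommGroup E] {T τ lam β K : ℝ}
    (hK : 0 ≤ K) {η : ℝ → E → ℝ}
    (h₁ : ∀ a ∈ Icc 0 T, ∀ b ∈ Icc 0 T, ∀ x y, |η a x - η b x - η a y + η b y| ≤
        K * (|b - a| ^ τ * ‖x - y‖ ^ lam * (1 + ‖x‖ ^ β + ‖y‖ ^ β)))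
    (h₂ : ∀ a ∈ Icc 0 T, ∀ b ∈ Icc 0 T, ∀ x, |η a x - η b x| ≤
        K * (|b - a| ^ τ * (1 + ‖x‖ ^ (β + lam))))
    (h₃ : ∀ b ∈ Icc 0 T, ∀ x y, |η b y - η b x| ≤
        K * (‖x - y‖ ^ lam * (1 + ‖x‖ ^ β + ‖y‖ ^ β))) :
    holderNormW T τ lam β η ≤ ENNReal.ofReal K + ENNReal.ofReal K + ENNReal.ofReal K := by
  refine add_le_add (add_le_add ?_ ?_) ?_
  · exact iSup₂_le fun a ha => iSup₂_le fun b hb => iSup₂_le fun x y =>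
      ENNReal.ofReal_le_ofReal (div_le_of_le_mul₀ (by positivity) hK (h₁ a ha b hb x y))
  · exact iSup₂_le fun a ha => iSup₂_le fun b hb => iSup_le fun x =>
      ENNReal.ofReal_le_ofReal (div_le_of_le_mul₀ (by positivity) hK (h₂ a ha b hb x))
  · exact iSup₂_le fun b hb => iSup₂_le fun x y =>
      ENNReal.ofReal_le_ofReal (div_le_of_le_mul₀ (by positivity) hK (h₃ b hb x y))

/-! ### Mollification of scalar functions -/

/-- A smooth bump on the line, centred at `0`, supported in the ball of radius `1 / (n + 1)`. -/
def timeBump (n : ℕ) : ContDiffBump (0 : ℝ) where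
  rIn := 1 / (2 * (n + 1))
  rOut := 1 / (n + 1)
  rIn_pos := by positivity
  rIn_lt_rOut := by
    have : (0 : ℝ) < n + 1 := by positivity
    exact one_div_lt_one_div_of_lt this (by linarith)

/-- The convolution of `f` with the bump `timeBump n` normalised to mass one. -/
def mol (n : ℕ) (f : ℝ → ℝ) : ℝ → ℝ :=
  convolution ((timeBump n).normed volume) f (ContinuousLinearMap.lsmul ℝ ℝ) volume

lemma mol_sub (n : ℕ) {f g : ℝ → ℝ} (hf : Continuous f) (hg : Continuous g) (t : ℝ) :
    mol n (fun s => f s - g s) t = mol n f t - mol n g t := by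
  have key : ∀ {f : ℝ → ℝ}, Continuous f → ConvolutionExistsAt ((timeBump n).normed volume) f t
      (ContinuousLinearMap.lsmul ℝ ℝ) volume := fun hf =>
    (timeBump n).hasCompactSupport_normed.convolutionExists_left _
      (timeBump n).continuous_normed hf.locallyIntegrable t
  have := integral_sub (key hf) (key hg)
  simp only [mol, convolution_def]
  rw [← this]
  simp [mul_sub]

lemma mol_translate (n : ℕ) (f : ℝ → ℝ) (h t : ℝ) :
    mol n (fun s => f (s + h)) t = mol n f (t + h) := by
  simp only [mol, convolution_def]
  congr 1
  ext s
  rw [show t - s + h = t + h - s by ring]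

/-- A function within `K` of `z` near `t` has mollification within `K` of `z` at `t`. -/
lemma abs_mol_sub_le (n : ℕ) {f : ℝ → ℝ} (hf : Continuous f) {t z K : ℝ} (hK : 0 ≤ K)
    (h : ∀ s, |s - t| < 1 / (n + 1) → |f s - z| ≤ K) : |mol n f t - z| ≤ K := by
  refine dist_convolution_le (f := (timeBump n).normed volume) (R := 1 / (n + 1)) hK
    ?_ (timeBump n).nonneg_normed (timeBump n).integral_normed hf.aestronglyMeasurable ?_
  · rw [(timeBump n).support_normed_eq]
    exact subset_rfl
  · intro s hs
    exact h s hs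

lemma abs_mol_sub_self_le (n : ℕ) {f : ℝ → ℝ} (hf : Continuous f) {M τ : ℝ} (hM : 0 ≤ M)
    (hτ : 0 < τ) (h : ∀ a b, |f a - f b| ≤ M * |b - a| ^ τ) (t : ℝ) :
    |mol n f t - f t| ≤ M * (1 / ((n : ℝ) + 1)) ^ τ := by
  refine abs_mol_sub_le n hf (by positivity) fun s hs => (h s t).trans ?_
  rw [abs_sub_comm] at hs
  gcongr

lemma abs_mol_sub_mol_le (n : ℕ) {f : ℝ → ℝ} (hf : Continuous f) {M τ : ℝ} (hM : 0 ≤ M)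
    (h : ∀ a b, |f a - f b| ≤ M * |b - a| ^ τ) (a b : ℝ) :
    |mol n f a - mol n f b| ≤ M * |b - a| ^ τ := by
  have hg : Continuous fun s => f (s + (b - a)) := by fun_prop
  have e : mol n (fun s => f s - f (s + (b - a))) a = mol n f a - mol n f b := by
    rw [mol_sub n hf hg, mol_translate]
    congr 2
    ring
  have := abs_mol_sub_le n (f := fun s => f s - f (s + (b - a))) (hf.sub hg) (t := a) (z := 0) (K := M * |b - a| ^ τ) (by positivity)
    (fun s _ => by simpa using h s (s + (b - a)))
  rwa [sub_zero, e] at this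

/-- Increments of the mollification error are small in every weaker Hölder norm: for increments
of length at most `ε = 1 / (n + 1)` by the Hölder bound, for longer ones by uniform smallness. -/
lemma abs_error_sub_error_le (n : ℕ) {f : ℝ → ℝ} (hf : Continuous f) {M τ τ' : ℝ} (hM : 0 ≤ M)
    (hτ' : 0 < τ') (hττ' : τ' < τ) (h : ∀ a b, |f a - f b| ≤ M * |b - a| ^ τ) (a b : ℝ) :
    |(mol n f a - f a) - (mol n f b - f b)| ≤
      2 * M * (1 / ((n : ℝ) + 1)) ^ (τ - τ') * |b - a| ^ τ' := by
  have hτ : 0 < τ := hτ'.trans hττ'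
  set ε : ℝ := 1 / ((n : ℝ) + 1) with hε
  have hεpos : 0 < ε := by positivity
  rcases le_total |b - a| ε with hle | hle
  · have e : |b - a| ^ τ ≤ ε ^ (τ - τ') * |b - a| ^ τ' := by
      have : |b - a| ^ τ = |b - a| ^ (τ - τ') * |b - a| ^ τ' := by
        rw [← Real.rpow_add' (abs_nonneg _) (by simpa using hτ.ne')]
        simp
      rw [this]
      gcongr
    calc |(mol n f a - f a) - (mol n f b - f b)|
        = |(mol n f a - mol n f b) - (f a - f b)| := by ring_nf
      _ ≤ |mol n f a - mol n f b| + |f a - f b| := abs_sub _ _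
      _ ≤ M * |b - a| ^ τ + M * |b - a| ^ τ :=
          add_le_add (abs_mol_sub_mol_le n hf hM h a b) (h a b)
      _ = 2 * M * |b - a| ^ τ := by ring
      _ ≤ 2 * M * (ε ^ (τ - τ') * |b - a| ^ τ') := by gcongr
      _ = _ := by ring
  · have e : ε ^ τ ≤ ε ^ (τ - τ') * |b - a| ^ τ' := by
      have : ε ^ τ = ε ^ (τ - τ') * ε ^ τ' := by
        rw [← Real.rpow_add hεpos]
        simp
      rw [this]
      gcongr
    calc |(mol n f a - f a) - (mol n f b - f b)|
        ≤ |mol n f a - f a| + |mol n f b - f b| := abs_sub _ _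
      _ ≤ M * ε ^ τ + M * ε ^ τ :=
          add_le_add (abs_mol_sub_self_le n hf hM hτ h a) (abs_mol_sub_self_le n hf hM hτ h b)
      _ = 2 * M * ε ^ τ := by ring
      _ ≤ 2 * M * (ε ^ (τ - τ') * |b - a| ^ τ') := by gcongr
      _ = _ := by ring

/-! ### Regularity in time -/

lemma contDiff_mol (n : ℕ) {f : ℝ → ℝ} (hf : Continuous f) : ContDiff ℝ (⊤ : ℕ∞) (mol n f) :=
  (timeBump n).hasCompactSupport_normed.contDiff_convolution_left _
    (timeBump n).contDiff_normed hf.locallyIntegrable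

lemma hasDerivAt_mol (n : ℕ) {f : ℝ → ℝ} (hf : Continuous f) (t : ℝ) :
    HasDerivAt (mol n f) (∫ s, deriv ((timeBump n).normed volume) s * f (t - s)) t :=
  (timeBump n).hasCompactSupport_normed.hasDerivAt_convolution_left _
    (timeBump n).contDiff_normed hf.locallyIntegrable t

lemma continuous_integral_deriv {E : Type*} [NormedAddCommGroup E] [LocallyCompactSpace E]
    (n : ℕ) {g : ℝ → E → ℝ}
    (hg : Continuous fun q : ℝ × E => g q.1 q.2) :
    Continuous fun q : ℝ × E =>
      ∫ s, deriv ((timeBump n).normed volume) s * g (q.1 - s) q.2 := by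
  set ψ : ℝ → ℝ := deriv ((timeBump n).normed volume) with hψ
  have hc : HasCompactSupport ψ := (timeBump n).hasCompactSupport_normed.deriv
  have hψc : Continuous ψ :=
    ((timeBump n).contDiff_normed (n := 1)).continuous_deriv le_rfl
  have e : ∀ q : ℝ × E, ∫ s, ψ s * g (q.1 - s) q.2
      = ∫ s in tsupport ψ, ψ s * g (q.1 - s) q.2 := fun q =>
    (setIntegral_eq_integral_of_forall_compl_eq_zero fun s hs => by
      rw [image_eq_zero_of_notMem_tsupport hs, zero_mul]).symm
  simp_rw [e]
  refine continuous_parametric_integral_of_continuous ?_ hc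
  have : Continuous fun r : (ℝ × E) × ℝ => g (r.1.1 - r.2) r.1.2 :=
    hg.comp (f := fun r : (ℝ × E) × ℝ => (r.1.1 - r.2, r.1.2)) (by fun_prop)
  exact (hψc.comp continuous_snd).mul this

lemma continuous_of_bounds {E : Type*} [NormedAddCommGroup E] {τ lam β C : ℝ}
    (hτ : 0 < τ) (hlam : 0 < lam) (hβ : 0 ≤ β) {g : ℝ → E → ℝ}
    (h₂ : ∀ a b x, |g a x - g b x| ≤ C * (|b - a| ^ τ * (1 + ‖x‖ ^ (β + lam))))
    (h₃ : ∀ b x y, |g b y - g b x| ≤ C * (‖x - y‖ ^ lam * (1 + ‖x‖ ^ β + ‖y‖ ^ β))) :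
    Continuous fun q : ℝ × E => g q.1 q.2 := by
  refine continuous_iff_continuousAt.2 fun q₀ => tendsto_iff_dist_tendsto_zero.2 ?_
  have hR : Continuous fun q : ℝ × E =>
      C * (‖q₀.2 - q.2‖ ^ lam * (1 + ‖q₀.2‖ ^ β + ‖q.2‖ ^ β)) +
        C * (|q₀.1 - q.1| ^ τ * (1 + ‖q₀.2‖ ^ (β + lam))) := by
    have c1 : Continuous fun q : ℝ × E => ‖q₀.2 - q.2‖ ^ lam :=
      Continuous.rpow_const (by fun_prop) fun _ => Or.inr hlam.le
    have c2 : Continuous fun q : ℝ × E => ‖q.2‖ ^ β :=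
      Continuous.rpow_const (by fun_prop) fun _ => Or.inr hβ
    have c3 : Continuous fun q : ℝ × E => |q₀.1 - q.1| ^ τ :=
      Continuous.rpow_const (by fun_prop) fun _ => Or.inr hτ.le
    fun_prop
  refine squeeze_zero (fun _ => dist_nonneg) (fun q => ?_) (hR.tendsto' q₀ 0 ?_)
  · calc dist (g q.1 q.2) (g q₀.1 q₀.2)
        ≤ dist (g q.1 q.2) (g q.1 q₀.2) + dist (g q.1 q₀.2) (g q₀.1 q₀.2) := dist_triangle _ _ _
      _ ≤ _ := add_le_add (h₃ q.1 q₀.2 q.2) (h₂ q.1 q₀.1 q₀.2)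
  · simp [Real.zero_rpow hτ.ne', Real.zero_rpow hlam.ne']

/-- a function with finite weighted seminorm `‖·‖_{τ,λ;β}` can be approximated
by functions that are smooth in time with jointly continuous time derivative, have finite
`‖·‖_{τ,λ;β}`-seminorm, and converge in every `‖·‖_{τ',λ;β}`-seminorm with `τ' < τ`. -/
theorem holderNormW_smooth_in_time_approximation
    (T : ℝ) (hT : 0 < T) (d : ℕ) (hd : 1 ≤ d)
    (τ lam β : ℝ) (hτ : τ ∈ Set.Ioc (0 : ℝ) 1) (hlam : lam ∈ Set.Ioc (0 : ℝ) 1) (hβ : 0 ≤ β)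
    (η : ℝ → EuclideanSpace ℝ (Fin d) → ℝ)
    (hη : holderNormW T τ lam β η < ⊤) :
    ∃ ηa : ℕ → ℝ → EuclideanSpace ℝ (Fin d) → ℝ,
      (∀ n : ℕ, 1 ≤ n →
        holderNormW T τ lam β (ηa n) < ⊤ ∧
        (∀ x : EuclideanSpace ℝ (Fin d),
          ContDiffOn ℝ (⊤ : ℕ∞) (fun u => ηa n u x) (Set.Icc 0 T)) ∧
        ∃ D : ℝ → EuclideanSpace ℝ (Fin d) → ℝ,
          (∀ x : EuclideanSpace ℝ (Fin d), ∀ u ∈ Set.Icc (0 : ℝ) T,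
            HasDerivWithinAt (fun v => ηa n v x) (D u x) (Set.Icc 0 T) u) ∧
          ContinuousOn (fun q : ℝ × EuclideanSpace ℝ (Fin d) => D q.1 q.2)
            (Set.Icc 0 T ×ˢ Set.univ)) ∧
      ∀ τ' : ℝ, 0 < τ' → τ' < τ →
        Filter.Tendsto (fun n => holderNormW T τ' lam β (fun u x => ηa n u x - η u x))
          Filter.atTop (nhds 0) := by
  obtain ⟨hτ0, hτ1⟩ := hτ
  obtain ⟨hl0, hl1⟩ := hlam
  obtain ⟨C, hC, b₁, b₂, b₃⟩ := bounds_of_holderNormW_lt_top hτ0 hl0 hη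
  -- `g` extends `η` from `[0, T]` to all times by clamping; clamping is 1-Lipschitz
  let p : ℝ → ℝ := fun t => (projIcc 0 T hT.le t : ℝ)
  have hp : ∀ t, p t ∈ Icc 0 T := fun t => (projIcc 0 T hT.le t).2
  have hp_eq : ∀ t ∈ Icc 0 T, p t = t := fun t ht => by simp [p, projIcc_of_mem hT.le ht]
  have hp_lip : ∀ a b, |p b - p a| ^ τ ≤ |b - a| ^ τ := fun a b =>
    Real.rpow_le_rpow (abs_nonneg _) (abs_projIcc_sub_projIcc hT.le) hτ0.le
  let g : ℝ → EuclideanSpace ℝ (Fin d) → ℝ := fun t x => η (p t) x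
  have hg : ∀ t ∈ Icc 0 T, ∀ x, g t x = η t x := fun t ht x => by simp only [g, hp_eq t ht]
  have g₂ : ∀ x a b, |g a x - g b x| ≤ C * (1 + ‖x‖ ^ (β + lam)) * |b - a| ^ τ := fun x a b =>
    calc _ ≤ C * (|p b - p a| ^ τ * (1 + ‖x‖ ^ (β + lam))) := b₂ _ (hp a) _ (hp b) x
      _ ≤ C * (|b - a| ^ τ * (1 + ‖x‖ ^ (β + lam))) := by
        have := hp_lip a b
        gcongr
      _ = _ := by ring
  have g₁ : ∀ x y a b, |(g a x - g a y) - (g b x - g b y)| ≤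
      C * (‖x - y‖ ^ lam * (1 + ‖x‖ ^ β + ‖y‖ ^ β)) * |b - a| ^ τ := fun x y a b =>
    calc _ = |η (p a) x - η (p b) x - η (p a) y + η (p b) y| := by
          simp only [g]
          ring_nf
      _ ≤ C * (|p b - p a| ^ τ * ‖x - y‖ ^ lam * (1 + ‖x‖ ^ β + ‖y‖ ^ β)) :=
        b₁ _ (hp a) _ (hp b) x y
      _ ≤ C * (|b - a| ^ τ * ‖x - y‖ ^ lam * (1 + ‖x‖ ^ β + ‖y‖ ^ β)) := by
        have := hp_lip a b
        gcongr
      _ = _ := by ring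
  have g₃ : ∀ b x y, |g b y - g b x| ≤ C * (‖x - y‖ ^ lam * (1 + ‖x‖ ^ β + ‖y‖ ^ β)) :=
    fun b x y => b₃ _ (hp b) x y
  have gcont : Continuous fun q : ℝ × EuclideanSpace ℝ (Fin d) => g q.1 q.2 :=
    continuous_of_bounds hτ0 hl0 hβ (fun a b x => (g₂ x a b).trans_eq (by ring)) g₃
  have gc : ∀ x, Continuous fun t => g t x := fun x =>
    gcont.comp (f := fun t : ℝ => (t, x)) (by fun_prop)
  have gcd : ∀ x y, Continuous fun t => g t x - g t y := fun x y => (gc x).sub (gc y)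
  refine ⟨fun n t x => mol n (fun s => g s x) t, fun n _ => ⟨?_, ?_, ?_⟩, ?_⟩
  · refine (holderNormW_le_of_bounds hC ?_ ?_ ?_).trans_lt
      (by simp [ENNReal.add_lt_top, ENNReal.ofReal_lt_top])
    · intro a _ b _ x y
      have := abs_mol_sub_mol_le n (gcd x y) (by positivity) (g₁ x y) a b
      rw [mol_sub n (gc x) (gc y), mol_sub n (gc x) (gc y)] at this
      convert this using 1
      · ring_nf
      · ring
    · intro a _ b _ x
      exact (abs_mol_sub_mol_le n (gc x) (by positivity) (g₂ x) a b).trans_eq (by ring)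
    · intro b _ x y
      have := abs_mol_sub_le n (gcd y x) (t := b) (z := 0)
        (K := C * (‖x - y‖ ^ lam * (1 + ‖x‖ ^ β + ‖y‖ ^ β))) (by positivity)
        (fun s _ => by simpa using g₃ s x y)
      rwa [sub_zero, mol_sub n (gc y) (gc x)] at this
  · exact fun x => (contDiff_mol n (gc x)).contDiffOn
  · exact ⟨fun t x => ∫ s, deriv ((timeBump n).normed volume) s * g (t - s) x,
      fun x u _ => (hasDerivAt_mol n (gc x) u).hasDerivWithinAt,
      (continuous_integral_deriv n gcont).continuousOn⟩
  · intro τ' hτ' hττ'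
    have hpow : ∀ r : ℝ, 0 < r → Tendsto (fun n : ℕ => (1 / ((n : ℝ) + 1)) ^ r) atTop (𝓝 0) :=
      fun r hr => by
        have := (tendsto_one_div_add_atTop_nhds_zero_nat (𝕜 := ℝ)).rpow_const
          (p := r) (Or.inr hr.le)
        rwa [Real.zero_rpow hr.ne'] at this
    -- `2 C ε ^ (τ - τ')` controls time increments of the error, `C ε ^ τ` its space increments
    let K : ℕ → ℝ := fun n =>
      2 * C * (1 / ((n : ℝ) + 1)) ^ (τ - τ') + C * (1 / ((n : ℝ) + 1)) ^ τ
    have hK : Tendsto K atTop (𝓝 0) := by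
      have := ((hpow (τ - τ') (by linarith)).const_mul (2 * C)).add ((hpow τ hτ0).const_mul C)
      simpa [K] using this
    have hK' : Tendsto (fun n => ENNReal.ofReal (K n)) atTop (𝓝 0) := by
      simpa using ENNReal.tendsto_ofReal hK
    refine tendsto_of_tendsto_of_tendsto_of_le_of_le tendsto_const_nhds
      (by simpa using (hK'.add hK').add hK') (fun _ => zero_le) fun n => ?_
    have hKt : 2 * C * (1 / ((n : ℝ) + 1)) ^ (τ - τ') ≤ K n :=
      le_add_of_nonneg_right (by positivity)
    have hKx : C * (1 / ((n : ℝ) + 1)) ^ τ ≤ K n := le_add_of_nonneg_left (by positivity)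
    have hKn : 0 ≤ K n := by positivity
    refine holderNormW_le_of_bounds hKn ?_ ?_ ?_
    · intro a ha b hb x y
      have := abs_error_sub_error_le n (gcd x y) (by positivity) hτ' hττ' (g₁ x y) a b
      rw [mol_sub n (gc x) (gc y), mol_sub n (gc x) (gc y)] at this
      simp only [← hg a ha, ← hg b hb]
      calc _ = _ := by ring_nf
        _ ≤ _ := this
        _ = 2 * C * (1 / ((n : ℝ) + 1)) ^ (τ - τ') *
            (|b - a| ^ τ' * ‖x - y‖ ^ lam * (1 + ‖x‖ ^ β + ‖y‖ ^ β)) := by ring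
        _ ≤ _ := mul_le_mul_of_nonneg_right hKt (by positivity)
    · intro a ha b hb x
      simp only [← hg a ha, ← hg b hb]
      calc _ ≤ _ := abs_error_sub_error_le n (gc x) (by positivity) hτ' hττ' (g₂ x) a b
        _ = 2 * C * (1 / ((n : ℝ) + 1)) ^ (τ - τ') *
            (|b - a| ^ τ' * (1 + ‖x‖ ^ (β + lam))) := by ring
        _ ≤ _ := mul_le_mul_of_nonneg_right hKt (by positivity)
    · intro b hb x y
      have := abs_mol_sub_self_le n (gcd x y) (by positivity) hτ0 (g₁ x y) b
      rw [mol_sub n (gc x) (gc y), abs_sub_comm] at this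
      simp only [← hg b hb]
      calc _ = _ := by ring_nf
        _ ≤ _ := this
        _ = C * (1 / ((n : ℝ) + 1)) ^ τ *
            (‖x - y‖ ^ lam * (1 + ‖x‖ ^ β + ‖y‖ ^ β)) := by ring
        _ ≤ _ := mul_le_mul_of_nonneg_right hKx (by positivity)
end
end

section
/- Let T > 0, let d ≥ 1 be an integer, and let B : [0,T]×ℝ^d → ℝ be a function such that B(r, z) = 0 whenever z_j = 0 for some j ∈ {1,…,d} (where z = (z_1,…,z_d)). Then for all s, t ∈ [0,T] and all x = (x_1,…,x_d), y = (y_1,…,y_d) ∈ ℝ^d: B(t,x) − B(t,y) − B(s,x) + B(s,y) = (−1)^{d+1} Σ_{k=1}^d B(□_{d+1}[(t, w^k), (s, z^k)]), where w^k := (x_1, …, x_k, y_{k+1}, …, y_d) and z^k := (0, …, 0, y_k, 0, …, 0) with y_k in the k-th coordinate. -/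
/-!
In the box spanned by `(t, wᵏ)` and `(s, zᵏ)`, every corner that uses a coordinate `j ≠ k` of `zᵏ`
lies in a coordinate hyperplane, where `B` vanishes. Only four corners remain: time `t` or `s`,
and space `wᵏ` or `wᵏ` with its `k`-th coordinate replaced by `y_k`. The latter point is `wᵏ⁻¹`,
so up to the sign `(-1)^(d+1)` the increment is the `k`-th term of a telescoping sum
(`boxIncr_interp`), running from `w⁰ = y` to `wᵈ = x`.
-/

open Set
open scoped BigOperators

noncomputable section

/-- The `(d+1)`-fold rectangular increment of `B : ℝ × ℝ^d → ℝ` over the box with corners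
`u = (u₀, u₁, …, u_d)` and `v = (v₀, v₁, …, v_d)` (time coordinate first):
`B(□_{d+1}[u,v]) = ∑_{ε ∈ {0,1}^{d+1}} (-1)^{(d+1) - Σεᵢ} B(wᵉ)` where `wᵉ` takes the `i`-th
coordinate of `u` if `εᵢ = 0` and of `v` if `εᵢ = 1`. -/
def boxIncr {d : ℕ} (B : ℝ → (Fin d → ℝ) → ℝ) (u v : ℝ × (Fin d → ℝ)) : ℝ :=
  ∑ ε : Bool × (Fin d → Bool),
    (-1 : ℝ) ^ ((d + 1) - ((if ε.1 then 1 else 0) + ∑ j, if ε.2 j then 1 else 0)) *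
      B (if ε.1 then v.1 else u.1) (fun j => if ε.2 j then v.2 j else u.2 j)

/-- The point `wᵐ = (x₁, …, x_m, y_{m+1}, …, y_d)`, for `m : ℕ`; thus `interp x y 0 = y` and
`interp x y d = x`. In zero-based indices, the coordinates `j < m` come from `x`. -/
def interp {d : ℕ} (x y : Fin d → ℝ) (m : ℕ) : Fin d → ℝ :=
  fun j => if j.val < m then x j else y j

/-- Summing over the spatial corners at a fixed time leaves two terms: the corner `wᵏ⁺¹`
(no coordinate taken from `z`) and the corner `wᵏ` (only the `k`-th one taken from `z`),
with `z = (0, …, y_k, …, 0)` and `k` zero-based.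
The weight `c` depends on the number of coordinates taken from `z`. -/
lemma sum_corners {d : ℕ} (b : (Fin d → ℝ) → ℝ) (hb : ∀ z, (∃ j, z j = 0) → b z = 0)
    (x y : Fin d → ℝ) (k : Fin d) (c : ℕ → ℝ) :
    ∑ ε : Fin d → Bool, c (∑ j, if ε j then 1 else 0) *
        b (fun j => if ε j then (if j = k then y k else 0) else (if j ≤ k then x j else y j)) =
      c 0 * b (interp x y (k + 1)) + c 1 * b (interp x y k) := by
  have hne : (fun _ => false : Fin d → Bool) ≠ fun j => decide (j = k) := fun h => by
    simpa using congrFun h k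
  rw [Fintype.sum_eq_add _ _ hne]
  · congr 2
    · simp
    · congr 1
      funext j
      simp [interp, Nat.lt_succ_iff]
    · simp
    · congr 1
      funext j
      by_cases h : j = k
      · subst h
        simp [interp]
      · simp [interp, h, le_iff_lt_or_eq]
  · rintro ε ⟨h0, h1⟩
    obtain ⟨j, hj, hjk⟩ : ∃ j, ε j = true ∧ j ≠ k := by
      by_contra! hcon
      -- The support of `ε` is contained in `{k}`, so `ε` is one of the two excluded corners.
      cases hk : ε k
      · refine h0 (funext fun j => ?_)
        cases hj : ε j
        · rfl
        · have := hcon j hj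
          simp_all
      · refine h1 (funext fun j => ?_)
        by_cases h : j = k
        · simp [h, hk]
        · have : ε j ≠ true := fun e => h (hcon j e)
          simp [h, this]
    rw [hb _ ⟨j, by simp [hj, hjk]⟩, mul_zero]

lemma boxIncr_interp {d : ℕ} (B : ℝ → (Fin d → ℝ) → ℝ)
    (hB : ∀ (r : ℝ) (z : Fin d → ℝ), (∃ j, z j = 0) → B r z = 0)
    (s t : ℝ) (x y : Fin d → ℝ) (k : Fin d) :
    boxIncr B (t, fun j => if j ≤ k then x j else y j) (s, fun j => if j = k then y k else 0) =
      (-1 : ℝ) ^ (d + 1) * ((B t (interp x y (k + 1)) - B s (interp x y (k + 1))) -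
        (B t (interp x y k) - B s (interp x y k))) := by
  have hs := sum_corners (B s) (hB s) x y k (fun n => (-1 : ℝ) ^ ((d + 1) - (1 + n)))
  have ht := sum_corners (B t) (hB t) x y k (fun n => (-1 : ℝ) ^ ((d + 1) - (0 + n)))
  simp only [boxIncr, Fintype.sum_prod_type, Fintype.sum_bool, if_true, Bool.false_eq_true,
    if_false]
  rw [hs, ht]
  -- Writing `d = e + 1` makes the truncated exponents `d + 1 - 2` and `d + 1 - 1` explicit.
  obtain ⟨e, rfl⟩ : ∃ e, d = e + 1 := ⟨d - 1, by have := k.2; omega⟩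
  simp only [show e + 1 + 1 - (1 + 0) = e + 1 by omega, show e + 1 + 1 - (1 + 1) = e by omega,
    show e + 1 + 1 - (0 + 0) = e + 2 by omega]
  ring

/-- if `B(r, z) = 0` whenever some space coordinate `z_j` vanishes, then the
second-order (time-space) increment of `B` decomposes as a signed sum of `(d+1)`-fold
rectangular increments over the boxes with corners `(t, wᵏ)` and `(s, zᵏ)`, where
`wᵏ = (x₁, …, x_k, y_{k+1}, …, y_d)` and `zᵏ = (0, …, 0, y_k, 0, …, 0)`. -/
theorem increment_eq_sum_boxIncr
    (T : ℝ) (hT : 0 < T) (d : ℕ) (hd : 1 ≤ d)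
    (B : ℝ → (Fin d → ℝ) → ℝ)
    (hB : ∀ (r : ℝ) (z : Fin d → ℝ), (∃ j, z j = 0) → B r z = 0) :
    ∀ s ∈ Set.Icc (0 : ℝ) T, ∀ t ∈ Set.Icc (0 : ℝ) T, ∀ x y : Fin d → ℝ,
      B t x - B t y - B s x + B s y =
        (-1 : ℝ) ^ (d + 1) *
          ∑ k : Fin d,
            boxIncr B (t, fun j => if j ≤ k then x j else y j)
              (s, fun j => if j = k then y k else 0) := by
  intro s _ t _ x y
  simp only [boxIncr_interp B hB]
  rw [← Finset.mul_sum, ← mul_assoc, ← mul_pow, neg_one_mul, neg_neg, one_pow, one_mul,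
    Fin.sum_univ_eq_sum_range (fun m => (B t (interp x y (m + 1)) - B s (interp x y (m + 1))) -
      (B t (interp x y m) - B s (interp x y m))),
    Finset.sum_range_sub (fun m => B t (interp x y m) - B s (interp x y m))]
  have h0 : interp x y 0 = y := by funext j; simp [interp]
  have h1 : interp x y d = x := by funext j; simp [interp]
  rw [h0, h1]
  ring
end
end
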